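/- Let q be a prime power and suppose a one-dimensional digital sequence over F_q is generated by a finite-row matrix C with Condition UD-rank for t = 0 and optimal row lengths (row j has length exactly j, i.e., c_{j,r} = 0 for r ≥ j and c_{j,j-1} ≠ 0, so that the m×m matrix (c_{j,r})_{1≤j≤m, 0≤r≤m-1} is invertible for all m). Let (s_n)_{n≥0} be a sequence in Z_q. Then the generated sequence (x_n) in [0,1] is uniformly distributed if and only if (s_n) is uniformly distributed in Z_q. -/

import Mathlib

def Zb (b : ℕ) : Subring (∀ k : ℕ, ZMod (b ^ k)) where
  carrier := {x | ∀ k, ZMod.castHom (pow_dvd_pow b (Nat.le_succ k)) (ZMod (b ^ k)) (x (k + 1)) = x k}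
  zero_mem' := fun k => map_zero _
  one_mem' := fun k => map_one _
  add_mem' := fun hx hy k => by rw [Pi.add_apply, map_add, hx k, hy k]; rfl
  mul_mem' := fun hx hy k => by rw [Pi.mul_apply, map_mul, hx k, hy k]; rfl
  neg_mem' := fun hx k => by rw [Pi.neg_apply, map_neg, hx k]; rfl

def natToZb (b : ℕ) (n : ℕ) : ↥(Zb b) := ⟨fun k => (n : ZMod (b ^ k)), fun k => map_natCast _ n⟩

def UDZb (b : ℕ) (x : ℕ → ↥(Zb b)) : Prop :=
  ∀ k : ℕ, 1 ≤ k → ∀ a : ZMod (b ^ k),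
    Filter.Tendsto
      (fun N => (((Finset.range N).filter (fun n => (x n).1 k = a)).card : ℝ) / N)
      Filter.atTop (nhds (1 / (b : ℝ) ^ k))

/-- The `r`-th `q`-adic digit of a `q`-adic integer `x`, as an element of `Fin q`. -/
def zbDigitF (q : ℕ) (hq : 0 < q) (x : ↥(Zb q)) (r : ℕ) : Fin q :=
  ⟨(x.1 (r + 1)).val / q ^ r % q, Nat.mod_lt _ hq⟩

/-- The one-dimensional digital point produced from the `q`-adic digits of `x` by the
generating matrix `c` (rows indexed from `1`) and bijections `ψ r`, `Λ j`. -/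
noncomputable def digPoint1 {F : Type} [Field F] (q : ℕ) (hq : 0 < q)
    (c : ℕ → ℕ → F) (ψ : ℕ → Fin q ≃ F) (Λ : ℕ → F ≃ Fin q) (x : ↥(Zb q)) : ℝ :=
  ∑' j : ℕ,
    (((Λ (j + 1)) (∑ᶠ r : ℕ, c (j + 1) r * ψ r (zbDigitF q hq x r)) : Fin q) : ℝ)
      / (q : ℝ) ^ (j + 1)

open Classical in
/-- Uniform distribution in `[0,1]` tested on `q`-adic intervals: every interval
`[a/q^d, (a+1)/q^d)` has asymptotic frequency `q^{-d}`. -/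
def UDInterval (q : ℕ) (x : ℕ → ℝ) : Prop :=
  ∀ d : ℕ, ∀ a : ℕ, a < q ^ d →
    Filter.Tendsto
      (fun N => (((Finset.range N).filter
        (fun n => (a : ℝ) / (q : ℝ) ^ d ≤ x n ∧ x n < ((a : ℝ) + 1) / (q : ℝ) ^ d)).card : ℝ) / N)
      Filter.atTop (nhds (1 / (q : ℝ) ^ d))

/-!
Condition UD-rank with rows of length `j` makes the first `d` output digits of a point a bijective
function of the first `d` input digits, that is, of the residue mod `q ^ d`. So `(s_n)` is uniformly
distributed in `Z_q` iff, for each `d`, all blocks of `d` leading output digits are equally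
frequent.

A real number with digits `a` lies in the `q`-adic interval named by its leading digit block, unless
all the later digits equal `q - 1`; in that case it is the right endpoint of the interval. The
indices `n` at which this happens form a set of density zero: they lie in a single digit block of
every length `d + e`, and their points lie in a single `q`-adic interval of length `q ^ (-(d + e))`.
Passing between blocks and intervals thus loses no density, and disjointness together with total
mass one upgrades the resulting lower bounds to limits.
-/

open Filter Topology Function

section NaturalDensity

open Classical in
/-- The proportion of elements of `A` among `0, …, N - 1` (with value `0` at `N = 0`). -/
noncomputable def partialDensity (A : Set ℕ) (N : ℕ) : ℝ :=
  ((Finset.range N).filter (· ∈ A)).card / N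

/-- `A` has natural density `δ`: the asymptotic frequency of the event `n ∈ A` is `δ`. -/
def HasNaturalDensity (A : Set ℕ) (δ : ℝ) : Prop :=
  Tendsto (partialDensity A) atTop (𝓝 δ)

lemma hasNaturalDensity_setOf_iff {p : ℕ → Prop} [DecidablePred p] {δ : ℝ} :
    HasNaturalDensity {n | p n} δ ↔
      Tendsto (fun N => (((Finset.range N).filter p).card : ℝ) / N) atTop (𝓝 δ) := by
  unfold HasNaturalDensity partialDensity
  simp only [Set.mem_ofPred_eq]

lemma partialDensity_nonneg (A : Set ℕ) (N : ℕ) : 0 ≤ partialDensity A N := by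
  unfold partialDensity
  positivity

lemma partialDensity_mono {A B : Set ℕ} (h : A ⊆ B) (N : ℕ) :
    partialDensity A N ≤ partialDensity B N := by
  unfold partialDensity
  gcongr

lemma partialDensity_le_diff_add (A B : Set ℕ) (N : ℕ) :
    partialDensity A N ≤ partialDensity (A \ B) N + partialDensity B N := by
  classical
  unfold partialDensity
  rw [← add_div]
  gcongr
  norm_cast
  refine le_trans (Finset.card_le_card fun n hn => ?_) (Finset.card_union_le _ _)
  simp only [Finset.mem_union, Finset.mem_filter, Set.mem_sdiff] at hn ⊢
  tauto

lemma sum_partialDensity_le_one {ι : Type*} [Fintype ι] {A : ι → Set ℕ}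
    (hA : Pairwise (Disjoint on A)) (N : ℕ) : ∑ i, partialDensity (A i) N ≤ 1 := by
  classical
  unfold partialDensity
  rw [← Finset.sum_div]
  refine div_le_one_of_le₀ ?_ N.cast_nonneg
  norm_cast
  have hdisj : Set.PairwiseDisjoint (Finset.univ : Finset ι)
      fun i => (Finset.range N).filter (· ∈ A i) := fun i _ j _ hij =>
    Finset.disjoint_filter.2 fun _ _ hi hj => Set.disjoint_left.1 (hA hij) hi hj
  rw [← Finset.card_biUnion hdisj]
  calc _ ≤ (Finset.range N).card :=
        Finset.card_le_card (Finset.biUnion_subset.2 fun _ _ => Finset.filter_subset _ _)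
    _ = N := Finset.card_range N

lemma hasNaturalDensity_univ : HasNaturalDensity Set.univ 1 := by
  refine tendsto_const_nhds.congr' ?_
  filter_upwards [eventually_ne_atTop 0] with N hN
  simp [partialDensity, hN]

lemma hasNaturalDensity_empty : HasNaturalDensity ∅ 0 :=
  tendsto_const_nhds.congr fun N => by simp [partialDensity]

lemma hasNaturalDensity_zero_of_subset {A : Set ℕ} {B : ℕ → Set ℕ} {δ : ℕ → ℝ}
    (hAB : ∀ e, A ⊆ B e) (hB : ∀ e, HasNaturalDensity (B e) (δ e))
    (hδ : Tendsto δ atTop (𝓝 0)) : HasNaturalDensity A 0 := by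
  refine tendsto_order.2
    ⟨fun c hc => .of_forall fun N => hc.trans_le (partialDensity_nonneg A N), fun c hc => ?_⟩
  obtain ⟨e, he⟩ := (hδ.eventually_lt_const hc).exists
  filter_upwards [(hB e).eventually_lt_const he] with N hN
  exact (partialDensity_mono (hAB e) N).trans_lt hN

lemma tendsto_of_eventually_lt_of_sum_le {ι α : Type*} [Fintype ι] {l : Filter α}
    {f : ι → α → ℝ} {w : ι → ℝ} (hlow : ∀ i, ∀ c < w i, ∀ᶠ x in l, c < f i x)
    (hsum : ∀ x, ∑ i, f i x ≤ ∑ i, w i) (i : ι) : Tendsto (f i) l (𝓝 (w i)) := by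
  classical
  refine tendsto_order.2 ⟨hlow i, fun c hc => ?_⟩
  set ε := (c - w i) / Fintype.card ι with hε
  have hcard : (0 : ℝ) < Fintype.card ι := by exact_mod_cast Fintype.card_pos_iff.2 ⟨i⟩
  have hε_pos : 0 < ε := div_pos (sub_pos.2 hc) hcard
  have hlow_all : ∀ᶠ x in l, ∀ j, w j - ε < f j x :=
    eventually_all.2 fun j => hlow j _ (sub_lt_self _ hε_pos)
  filter_upwards [hlow_all] with x hx
  have hexcess : f i x - (w i - ε) ≤ ∑ j, (f j x - (w j - ε)) :=
    Finset.single_le_sum (f := fun j => f j x - (w j - ε))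
      (fun j _ => (sub_pos.2 (hx j)).le) (Finset.mem_univ i)
  have htotal : ∑ j, (f j x - (w j - ε)) = ∑ j, f j x - ∑ j, w j + (c - w i) := by
    simp only [Finset.sum_sub_distrib, Finset.sum_const, Finset.card_univ, nsmul_eq_mul]
    rw [hε, mul_div_cancel₀ _ hcard.ne']
    ring
  linarith [hsum x]

theorem hasNaturalDensity_of_diff_zero {ι : Type*} [Fintype ι] {A B : ι → Set ℕ} {w : ι → ℝ}
    (hw : ∑ i, w i = 1) (hA : ∀ i, HasNaturalDensity (A i) (w i))
    (hB : Pairwise (Disjoint on B)) (hAB : ∀ i, HasNaturalDensity (A i \ B i) 0) (i : ι) :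
    HasNaturalDensity (B i) (w i) := by
  refine tendsto_of_eventually_lt_of_sum_le (f := fun i => partialDensity (B i))
    (fun i c hc => ?_) (fun N => hw ▸ sum_partialDensity_le_one hB N) i
  have hdiff : Tendsto (fun N => partialDensity (A i) N - partialDensity (A i \ B i) N) atTop
      (𝓝 (w i)) := by
    simpa only [sub_zero] using (hA i).sub (hAB i)
  filter_upwards [hdiff.eventually_const_lt hc] with N hN
  linarith [partialDensity_le_diff_add (A i) (B i) N]

end NaturalDensity

section Equidistribution

/-- A sequence in a finite type is equidistributed if all values have the same asymptotic
frequency. (For infinite `α` the junk value `1 / Nat.card α = 0` is required instead.) -/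
def IsEquidistributed {α : Type*} (u : ℕ → α) : Prop :=
  ∀ a, HasNaturalDensity {n | u n = a} (1 / Nat.card α)

lemma isEquidistributed_equiv_comp_iff {α β : Type*} (e : α ≃ β) {u : ℕ → α} :
    IsEquidistributed (fun n => e (u n)) ↔ IsEquidistributed u := by
  unfold IsEquidistributed
  rw [← e.forall_congr_right, Nat.card_congr e]
  simp only [EmbeddingLike.apply_eq_iff_eq]

lemma isEquidistributed_of_subsingleton {α : Type*} [Subsingleton α] (u : ℕ → α) :
    IsEquidistributed u := fun a => by
  have hcard : Nat.card α = 1 := Nat.card_eq_one_iff_unique.2 ⟨inferInstance, ⟨a⟩⟩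
  have huniv : {n | u n = a} = Set.univ := Set.eq_univ_of_forall fun n => Subsingleton.elim _ _
  simpa only [hcard, huniv, Nat.cast_one, div_one] using hasNaturalDensity_univ

lemma udZb_iff_isEquidistributed {b : ℕ} {x : ℕ → ↥(Zb b)} :
    UDZb b x ↔ ∀ k, IsEquidistributed fun n => (x n).1 k := by
  have hlevel (k : ℕ) : IsEquidistributed (fun n => (x n).1 k) ↔ ∀ a : ZMod (b ^ k), Tendsto
      (fun N => (((Finset.range N).filter (fun n => (x n).1 k = a)).card : ℝ) / N)
      atTop (𝓝 (1 / (b : ℝ) ^ k)) := by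
    simp only [IsEquidistributed, Nat.card_zmod, Nat.cast_pow, hasNaturalDensity_setOf_iff]
  refine ⟨fun h k => ?_, fun h k _ => (hlevel k).1 (h k)⟩
  rcases k.eq_zero_or_pos with rfl | hk
  · have : Subsingleton (ZMod (b ^ 0)) := inferInstanceAs (Subsingleton (ZMod 1))
    exact isEquidistributed_of_subsingleton _
  · exact (hlevel k).2 (h k hk)

lemma udInterval_iff_natFloor {q : ℕ} (hq : 0 < q) {x : ℕ → ℝ} (hx : ∀ n, 0 ≤ x n) :
    UDInterval q x ↔
      ∀ d, ∀ a < q ^ d, HasNaturalDensity {n | ⌊(q : ℝ) ^ d * x n⌋₊ = a} (1 / (q : ℝ) ^ d) := by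
  classical
  have hmem (d a n : ℕ) : ⌊(q : ℝ) ^ d * x n⌋₊ = a ↔
      (a : ℝ) / (q : ℝ) ^ d ≤ x n ∧ x n < ((a : ℝ) + 1) / (q : ℝ) ^ d := by
    have hqd : (0 : ℝ) < (q : ℝ) ^ d := by positivity
    rw [Nat.floor_eq_iff (mul_nonneg hqd.le (hx n)), div_le_iff₀' hqd, lt_div_iff₀' hqd]
  simp only [hmem, hasNaturalDensity_setOf_iff]
  unfold UDInterval
  congr!

end Equidistribution

section Digits

/-- The block of the first `d` terms of a sequence. -/
def leadingBlock {α : Type*} (a : ℕ → α) (d : ℕ) : Fin d → α := fun i => a i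

/-- Blocks of `d` digits correspond to the numbers below `b ^ d`, the first digit being the most
significant one. -/
def bigEndianEquiv (b d : ℕ) : (Fin d → Fin b) ≃ Fin (b ^ d) :=
  (Fin.revPerm.arrowCongr (Equiv.refl _)).trans finFunctionFinEquiv

variable {b : ℕ} {a : ℕ → Fin b}

lemma bigEndianEquiv_leadingBlock (a : ℕ → Fin b) (d : ℕ) :
    ((bigEndianEquiv b d (leadingBlock a d) : ℕ) : ℝ) =
      (b : ℝ) ^ d * ∑ i ∈ Finset.range d, Real.ofDigitsTerm a i := by
  have hb : (b : ℝ) ≠ 0 := by exact_mod_cast (a 0).pos.ne'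
  have hval : (bigEndianEquiv b d (leadingBlock a d) : ℕ) =
      ∑ i : Fin d, (a i : ℕ) * b ^ (i.rev : ℕ) := by
    rw [← Equiv.sum_comp Fin.revPerm]
    simp [bigEndianEquiv, leadingBlock]
  rw [hval, Finset.sum_range, Finset.mul_sum]
  push_cast
  refine Finset.sum_congr rfl fun i _ => ?_
  have hpow : (b : ℝ) ^ d = (b : ℝ) ^ (i.rev : ℕ) * (b : ℝ) ^ (i + 1 : ℕ) := by
    rw [← pow_add, Fin.val_rev, Nat.sub_add_cancel i.isLt]
  rw [Real.ofDigitsTerm, hpow]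
  field_simp

lemma pow_mul_ofDigits (a : ℕ → Fin b) (d : ℕ) :
    (b : ℝ) ^ d * Real.ofDigits a =
      (bigEndianEquiv b d (leadingBlock a d) : ℕ) + Real.ofDigits fun i => a (i + d) := by
  have hb : (b : ℝ) ≠ 0 := by exact_mod_cast (a 0).pos.ne'
  rw [Real.ofDigits_eq_sum_add_ofDigits a d, mul_add, ← bigEndianEquiv_leadingBlock,
    mul_inv_cancel_left₀ (pow_ne_zero d hb)]

lemma ofDigits_tail_eq_one_of_natFloor_ne {d : ℕ}
    (h : ⌊(b : ℝ) ^ d * Real.ofDigits a⌋₊ ≠ bigEndianEquiv b d (leadingBlock a d)) :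
    Real.ofDigits (fun i => a (i + d)) = 1 := by
  contrapose! h
  have htail := (Real.ofDigits_le_one fun i => a (i + d)).lt_of_ne h
  rw [pow_mul_ofDigits, add_comm, Nat.floor_add_natCast (Real.ofDigits_nonneg _),
    Nat.floor_eq_zero.2 htail, zero_add]

lemma natFloor_pow_add_mul_ofDigits {d : ℕ} (h : Real.ofDigits (fun i => a (i + d)) = 1) (e : ℕ) :
    ⌊(b : ℝ) ^ (d + e) * Real.ofDigits a⌋₊ = ⌊(b : ℝ) ^ d * Real.ofDigits a⌋₊ * b ^ e := by
  have hcast : (b : ℝ) ^ (d + e) * Real.ofDigits a =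
      (((bigEndianEquiv b d (leadingBlock a d) + 1) * b ^ e : ℕ) : ℝ) := by
    rw [pow_add, mul_right_comm, pow_mul_ofDigits, h]
    push_cast
    ring
  rw [hcast, Nat.floor_natCast, pow_mul_ofDigits, h, ← Nat.cast_add_one, Nat.floor_natCast]

lemma val_add_one_eq_of_ofDigits_eq_one (h : Real.ofDigits a = 1) (i : ℕ) :
    (a i : ℕ) + 1 = b := by
  have hhead {a : ℕ → Fin b} (h : Real.ofDigits a = 1) :
      (a 0 : ℕ) + 1 = b ∧ Real.ofDigits (fun i => a (i + 1)) = 1 := by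
    have hshift := pow_mul_ofDigits a 1
    have hval : (bigEndianEquiv b 1 (leadingBlock a 1) : ℕ) = a 0 := by
      simp [bigEndianEquiv, leadingBlock]
    rw [hval, h, pow_one, mul_one] at hshift
    have hdigit : ((a 0 : ℕ) : ℝ) + 1 ≤ b := by exact_mod_cast (a 0).isLt
    have htail : Real.ofDigits (fun i => a (i + 1)) = 1 :=
      le_antisymm (Real.ofDigits_le_one _) (by linarith)
    exact ⟨by exact_mod_cast (htail ▸ hshift).symm, htail⟩
  induction i generalizing a with
  | zero => exact (hhead h).1
  | succ _ ih => exact ih (hhead h).2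

lemma leadingBlock_add_eq_of_ofDigits_tail_eq_one {a' : ℕ → Fin b} {d : ℕ}
    (h : Real.ofDigits (fun i => a (i + d)) = 1) (h' : Real.ofDigits (fun i => a' (i + d)) = 1)
    (hblock : leadingBlock a d = leadingBlock a' d) (e : ℕ) :
    leadingBlock a (d + e) = leadingBlock a' (d + e) := by
  funext i
  rcases lt_or_ge (i : ℕ) d with hi | hi
  · exact congrFun hblock ⟨i, hi⟩
  · have hlast := val_add_one_eq_of_ofDigits_eq_one h (i - d)
    have hlast' := val_add_one_eq_of_ofDigits_eq_one h' (i - d)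
    simp only [Nat.sub_add_cancel hi] at hlast hlast'
    exact Fin.ext (by simp only [leadingBlock]; omega)

end Digits

section DigitSequences

lemma tendsto_one_div_pow_add_nhds_zero {b : ℝ} (hb : 1 < b) (d : ℕ) :
    Tendsto (fun e => 1 / b ^ (d + e)) atTop (𝓝 0) := by
  have hpow : Tendsto (fun e : ℕ => b ^ (d + e)) atTop atTop :=
    (tendsto_pow_atTop_atTop_of_one_lt hb).comp
      (tendsto_atTop_mono (fun e => Nat.le_add_left e d) tendsto_id)
  exact tendsto_const_nhds.div_atTop hpow

variable {q : ℕ} {a : ℕ → ℕ → Fin q}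

lemma isEquidistributed_leadingBlock_iff {d : ℕ} :
    IsEquidistributed (fun n => leadingBlock (a n) d) ↔
      ∀ v, HasNaturalDensity {n | leadingBlock (a n) d = v} (1 / (q : ℝ) ^ d) := by
  simp [IsEquidistributed]

lemma hasNaturalDensity_natFloor_diff_leadingBlock (hq : 1 < q)
    (hfloor : ∀ d, ∀ k < q ^ d,
      HasNaturalDensity {n | ⌊(q : ℝ) ^ d * Real.ofDigits (a n)⌋₊ = k} (1 / (q : ℝ) ^ d))
    {d : ℕ} (v : Fin d → Fin q) :
    HasNaturalDensity ({n | ⌊(q : ℝ) ^ d * Real.ofDigits (a n)⌋₊ = bigEndianEquiv q d v} \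
      {n | leadingBlock (a n) d = v}) 0 := by
  have hlt (e : ℕ) : (bigEndianEquiv q d v : ℕ) * q ^ e < q ^ (d + e) := by
    rw [pow_add]
    exact Nat.mul_lt_mul_of_pos_right (Fin.isLt _) (Nat.pow_pos (by omega))
  refine hasNaturalDensity_zero_of_subset (fun e => ?_) (fun e => hfloor (d + e) _ (hlt e))
    (tendsto_one_div_pow_add_nhds_zero (Nat.one_lt_cast.2 hq) d)
  rintro n ⟨hn : ⌊_⌋₊ = _, hne⟩
  have htail : Real.ofDigits (fun i => a n (i + d)) = 1 :=
    ofDigits_tail_eq_one_of_natFloor_ne fun h =>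
      hne ((bigEndianEquiv q d).injective (Fin.ext (h.symm.trans hn)))
  exact (natFloor_pow_add_mul_ofDigits htail e).trans (by rw [hn])

lemma hasNaturalDensity_leadingBlock_diff_natFloor (hq : 1 < q)
    (hblock : ∀ d, IsEquidistributed fun n => leadingBlock (a n) d)
    {d : ℕ} (v : Fin d → Fin q) :
    HasNaturalDensity ({n | leadingBlock (a n) d = v} \
      {n | ⌊(q : ℝ) ^ d * Real.ofDigits (a n)⌋₊ = bigEndianEquiv q d v}) 0 := by
  set E := {n | leadingBlock (a n) d = v} \
    {n | ⌊(q : ℝ) ^ d * Real.ofDigits (a n)⌋₊ = bigEndianEquiv q d v}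
  have htail {n : ℕ} (hn : n ∈ E) : Real.ofDigits (fun i => a n (i + d)) = 1 := by
    obtain ⟨rfl, hne⟩ := hn
    exact ofDigits_tail_eq_one_of_natFloor_ne hne
  rcases E.eq_empty_or_nonempty with hE | ⟨m, hm⟩
  · exact hE ▸ hasNaturalDensity_empty
  · refine hasNaturalDensity_zero_of_subset (fun e n hn => ?_)
      (fun e => isEquidistributed_leadingBlock_iff.1 (hblock (d + e)) (leadingBlock (a m) (d + e)))
      (tendsto_one_div_pow_add_nhds_zero (Nat.one_lt_cast.2 hq) d)
    exact leadingBlock_add_eq_of_ofDigits_tail_eq_one (htail hn) (htail hm)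
      (hn.1.trans hm.1.symm) e

theorem udInterval_ofDigits_iff (hq : 1 < q) :
    UDInterval q (fun n => Real.ofDigits (a n)) ↔
      ∀ d, IsEquidistributed fun n => leadingBlock (a n) d := by
  rw [udInterval_iff_natFloor (by omega) fun n => Real.ofDigits_nonneg (a n)]
  have hmass (d : ℕ) : ∑ _v : Fin d → Fin q, 1 / (q : ℝ) ^ d = 1 := by
    have : (q : ℝ) ≠ 0 := by exact_mod_cast (by omega : q ≠ 0)
    simp [this]
  constructor
  · intro hfloor d
    exact isEquidistributed_leadingBlock_iff.2 <| hasNaturalDensity_of_diff_zero (hmass d)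
      (fun v => hfloor d _ (bigEndianEquiv q d v).isLt)
      (pairwise_disjoint_fiber fun n => leadingBlock (a n) d)
      (hasNaturalDensity_natFloor_diff_leadingBlock hq hfloor)
  · intro hblock d k hk
    obtain ⟨v, hv⟩ := (bigEndianEquiv q d).surjective ⟨k, hk⟩
    obtain rfl : (bigEndianEquiv q d v : ℕ) = k := congrArg Fin.val hv
    have hdisj :=
      (pairwise_disjoint_fiber fun n => ⌊(q : ℝ) ^ d * Real.ofDigits (a n)⌋₊).comp_of_injective
        (Fin.val_injective.comp (bigEndianEquiv q d).injective)
    exact hasNaturalDensity_of_diff_zero (hmass d)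
      (isEquidistributed_leadingBlock_iff.1 (hblock d)) hdisj
      (hasNaturalDensity_leadingBlock_diff_natFloor hq hblock) v

end DigitSequences

section Zb

lemma zb_val_mod_pow {b : ℕ} (hb : 0 < b) (x : ↥(Zb b)) {k m : ℕ} (h : k ≤ m) :
    (x.1 m).val % b ^ k = (x.1 k).val := by
  have : NeZero b := ⟨hb.ne'⟩
  induction m, h using Nat.le_induction with
  | base => exact Nat.mod_eq_of_lt (ZMod.val_lt _)
  | succ m hkm ih =>
    rw [← ih, ← x.2 m, ZMod.castHom_apply, ZMod.cast_eq_val, ZMod.val_natCast,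
      Nat.mod_mod_of_dvd _ (pow_dvd_pow b hkm)]

lemma val_zbDigitF {q : ℕ} (hq : 0 < q) (x : ↥(Zb q)) {r d : ℕ} (h : r < d) :
    (zbDigitF q hq x r : ℕ) = (x.1 d).val / q ^ r % q := by
  simp only [zbDigitF, ← zb_val_mod_pow hq x (Nat.succ_le_of_lt h), Nat.succ_eq_add_one,
    pow_succ, Nat.mod_mul_right_div_self, Nat.mod_mod]

/-- The `q`-adic digits of a residue mod `q ^ d`, least significant digit first. -/
def residueDigitsEquiv (q d : ℕ) [NeZero q] : ZMod (q ^ d) ≃ (Fin d → Fin q) where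
  toFun y := finFunctionFinEquiv.symm ⟨y.val, y.val_lt⟩
  invFun v := (finFunctionFinEquiv v : ℕ)
  left_inv y := by simp
  right_inv v := (Equiv.symm_apply_eq _).2 (Fin.ext (ZMod.val_natCast_of_lt (Fin.isLt _)))

lemma leadingBlock_zbDigitF {q : ℕ} [NeZero q] (x : ↥(Zb q)) (d : ℕ) :
    leadingBlock (zbDigitF q (NeZero.pos q) x) d = residueDigitsEquiv q d (x.1 d) :=
  funext fun r => Fin.ext (val_zbDigitF (NeZero.pos q) x r.isLt)

end Zb

section DigitalMap

variable {R : Type*} [CommRing R] {q : ℕ}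

/-- The `q`-adic digits of the digital point `digPoint1 q _ c ψ Λ x` as a function of the digits `z`
of `x`; the matrix rows and the bijections `Λ` are indexed from `1`, the digits from `0`. -/
noncomputable def outputDigits (c : ℕ → ℕ → R) (ψ : ℕ → Fin q ≃ R) (Λ : ℕ → R ≃ Fin q)
    (z : ℕ → Fin q) (j : ℕ) : Fin q :=
  Λ (j + 1) (∑ᶠ r : ℕ, c (j + 1) r * ψ r (z r))

variable {c : ℕ → ℕ → R}

lemma finsum_mul_eq_mulVec_leadingBlock (hlen : ∀ j r : ℕ, 1 ≤ j → j ≤ r → c j r = 0)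
    (y : ℕ → R) {d : ℕ} (j : Fin d) :
    ∑ᶠ r : ℕ, c (j + 1) r * y r =
      (Matrix.of fun j r : Fin d => c (j.1 + 1) r.1).mulVec (leadingBlock y d) j := by
  rw [finsum_eq_sum_of_support_subset (s := Finset.range d), Finset.sum_range]
  · rfl
  · refine support_subset_iff'.2 fun r hr => ?_
    have hrow : j + 1 ≤ r := by
      have := j.isLt
      simp only [Finset.coe_range, Set.mem_Iio, not_lt] at hr
      omega
    rw [hlen _ r (Nat.le_add_left 1 j) hrow, zero_mul]

theorem exists_equiv_leadingBlock_outputDigits (hlen : ∀ j r : ℕ, 1 ≤ j → j ≤ r → c j r = 0)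
    {d : ℕ} (hinv : IsUnit (Matrix.of fun j r : Fin d => c (j.1 + 1) r.1).det)
    (ψ : ℕ → Fin q ≃ R) (Λ : ℕ → R ≃ Fin q) :
    ∃ e : (Fin d → Fin q) ≃ (Fin d → Fin q), ∀ z,
      leadingBlock (outputDigits c ψ Λ z) d = e (leadingBlock z d) := by
  let M := (Matrix.of fun j r : Fin d => c (j.1 + 1) r.1).toLinearEquiv (Pi.basisFun R (Fin d)) hinv
  refine ⟨((Equiv.piCongrRight fun r : Fin d => ψ r).trans M.toEquiv).trans
    (Equiv.piCongrRight fun j : Fin d => Λ (j + 1)), fun z => funext fun j => ?_⟩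
  have hM (y : Fin d → R) : M y = (Matrix.of fun j r : Fin d => c (j.1 + 1) r.1).mulVec y := by
    simp [M, Matrix.toLin_eq_toLin']
  simp only [leadingBlock, outputDigits,
    finsum_mul_eq_mulVec_leadingBlock hlen (fun r => ψ r (z r)) j]
  exact congrArg (Λ (j + 1)) (congrFun (hM _).symm j)

end DigitalMap

lemma digPoint1_eq_ofDigits {F : Type} [Field F] {q : ℕ} (hq : 0 < q) (c : ℕ → ℕ → F)
    (ψ : ℕ → Fin q ≃ F) (Λ : ℕ → F ≃ Fin q) (x : ↥(Zb q)) :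
    digPoint1 q hq c ψ Λ x = Real.ofDigits (outputDigits c ψ Λ (zbDigitF q hq x)) := by
  simp only [digPoint1, Real.ofDigits, Real.ofDigitsTerm, outputDigits, div_eq_mul_inv]

theorem stmt_19_general {R : Type*} [CommRing R] {q : ℕ} (hq : 1 < q) (c : ℕ → ℕ → R)
    (hlen : ∀ j r : ℕ, 1 ≤ j → j ≤ r → c j r = 0)
    (hinv : ∀ m : ℕ, IsUnit (Matrix.of fun j r : Fin m => c (j.1 + 1) r.1).det)
    (ψ : ℕ → Fin q ≃ R) (Λ : ℕ → R ≃ Fin q) (s : ℕ → ↥(Zb q)) :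
    UDInterval q (fun n => Real.ofDigits (outputDigits c ψ Λ (zbDigitF q (by omega) (s n)))) ↔
      UDZb q s := by
  have : NeZero q := ⟨by omega⟩
  rw [udInterval_ofDigits_iff hq, udZb_iff_isEquidistributed]
  refine forall_congr' fun d => ?_
  obtain ⟨e, he⟩ := exists_equiv_leadingBlock_outputDigits hlen (hinv d) ψ Λ
  simp only [he, leadingBlock_zbDigitF]
  rw [isEquidistributed_equiv_comp_iff e, isEquidistributed_equiv_comp_iff]

/-- one-dimensional case: let `c` be a finite-row generating matrix over `F_q`
with optimal row lengths, i.e. `c_{j,r} = 0` for `r ≥ j` (rows indexed from `1`) and every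
leading `m × m` submatrix invertible (Condition UD-rank for `t = 0`). For any sequence
`(s_n)` in `Z_q`, the generated sequence in `[0,1]` is uniformly distributed if and only if
`(s_n)` is uniformly distributed in `Z_q`. -/
theorem stmt_19 {F : Type} [Field F] [Fintype F] (q : ℕ) (hq : Fintype.card F = q)
    (hq0 : 0 < q) (c : ℕ → ℕ → F)
    (hlen : ∀ j r : ℕ, 1 ≤ j → j ≤ r → c j r = 0)
    (hinv : ∀ m : ℕ, IsUnit (Matrix.of (fun j r : Fin m => c (j.1 + 1) r.1)).det)
    (ψ : ℕ → Fin q ≃ F) (Λ : ℕ → F ≃ Fin q) (sn : ℕ → ↥(Zb q)) :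
    UDInterval q (fun n => digPoint1 q hq0 c ψ Λ (sn n)) ↔ UDZb q sn := by
  simpa only [digPoint1_eq_ofDigits] using
    stmt_19_general (hq ▸ Fintype.one_lt_card) c hlen hinv ψ Λ sn
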